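/- (Separability of UIDs and FDs) Let Σ_FD be a set of FDs, Σ_UID a set of UIDs, and I₀ a finite instance satisfying Σ_FD. Then for every Boolean conjunctive query q, (I₀, Σ_FD ∪ Σ_UID) ⊨_unr q if and only if (I₀, Σ_UID) ⊨_unr q. -/

import Mathlib

namespace FQA

/-- A relational signature: a finite set of relation names, each with an arity `≥ 1`. -/
structure Sig where
  Rel : Type
  rel_fin : Finite Rel
  ar : Rel → ℕ
  ar_pos : ∀ R, 1 ≤ ar R

/-- The positions of a signature: pairs of a relation and an index into its arity. -/
abbrev Sig.Pos (σ : Sig) : Type := Σ R : σ.Rel, Fin (σ.ar R)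

/-- A fact `R(a₁, …, a_{ar R})` with elements from `α`. -/
abbrev Fact (σ : Sig) (α : Type) : Type := Σ R : σ.Rel, Fin (σ.ar R) → α

/-- An instance is a set of facts. -/
abbrev Inst (σ : Sig) (α : Type) : Type := Set (Fact σ α)

variable {σ : Sig} {α β : Type}

/-- Element `a` occurs at position `p` in some fact of the instance `I`. -/
def occursAt (I : Inst σ α) (p : σ.Pos) (a : α) : Prop :=
  ∃ t : Fin (σ.ar p.1) → α, (⟨p.1, t⟩ : Fact σ α) ∈ I ∧ t p.2 = a

/-- The active domain of an instance: the elements occurring in some fact. -/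
def activeDom (I : Inst σ α) : Set α :=
  {a | ∃ F : Fact σ α, F ∈ I ∧ ∃ i, F.2 i = a}

/-- A unary inclusion dependency `src ⊆ dst` (nontrivial: `src ≠ dst`). -/
structure UID (σ : Sig) where
  src : σ.Pos
  dst : σ.Pos
  ne : src ≠ dst

/-- The reverse of a UID. -/
def UID.rev (τ : UID σ) : UID σ := ⟨τ.dst, τ.src, τ.ne.symm⟩

/-- An instance satisfies a UID if every element occurring at `src` also occurs at `dst`. -/
def satUID (I : Inst σ α) (τ : UID σ) : Prop :=
  ∀ a, occursAt I τ.src a → occursAt I τ.dst a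

/-- A functional dependency `R^L → R^r`, with `L` nonempty and `r ∉ L`. -/
structure FD (σ : Sig) where
  rel : σ.Rel
  lhs : Set (Fin (σ.ar rel))
  rhs : Fin (σ.ar rel)
  lhs_nonempty : lhs.Nonempty
  rhs_not_mem : rhs ∉ lhs

/-- An instance satisfies an FD if any two facts of `rel` agreeing on `lhs` agree on `rhs`. -/
def satFD (I : Inst σ α) (φ : FD σ) : Prop :=
  ∀ t u : Fin (σ.ar φ.rel) → α,
    (⟨φ.rel, t⟩ : Fact σ α) ∈ I → (⟨φ.rel, u⟩ : Fact σ α) ∈ I →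
    (∀ i ∈ φ.lhs, t i = u i) → t φ.rhs = u φ.rhs

/-- A Boolean conjunctive query: existentially quantified variables `Fin nv` and a
conjunction (list) of constant-free atoms, in which every variable occurs. -/
structure CQ (σ : Sig) where
  nv : ℕ
  atoms : List (Fact σ (Fin nv))
  vars_occur : ∀ x : Fin nv, ∃ A ∈ atoms, ∃ i, A.2 i = x

/-- The size of a CQ: its number of atoms. -/
def CQ.size (q : CQ σ) : ℕ := q.atoms.length

/-- A Boolean CQ holds in an instance iff there is a homomorphism (a match) from its
atoms to facts of the instance. -/
def satCQ (I : Inst σ α) (q : CQ σ) : Prop :=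
  ∃ h : Fin q.nv → α, ∀ A ∈ q.atoms, (⟨A.1, fun i => h (A.2 i)⟩ : Fact σ α) ∈ I

/-- An instance satisfies a set of UIDs and a set of FDs. -/
def satAllC (I : Inst σ ℕ) (Su : Set (UID σ)) (Sf : Set (FD σ)) : Prop :=
  (∀ τ ∈ Su, satUID I τ) ∧ (∀ φ ∈ Sf, satFD I φ)

/-- Unrestricted open-world entailment: every (finite or infinite) superinstance of `I₀`
satisfying the constraints satisfies `q`. -/
def unrEntails (I₀ : Inst σ ℕ) (Su : Set (UID σ)) (Sf : Set (FD σ)) (q : CQ σ) : Prop :=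
  ∀ I : Inst σ ℕ, I₀ ⊆ I → satAllC I Su Sf → satCQ I q

/-- Finite open-world entailment: every finite superinstance of `I₀` satisfying the
constraints satisfies `q`. -/
def finEntails (I₀ : Inst σ ℕ) (Su : Set (UID σ)) (Sf : Set (FD σ)) (q : CQ σ) : Prop :=
  ∀ I : Inst σ ℕ, I₀ ⊆ I → I.Finite → satAllC I Su Sf → satCQ I q

/-- A (nontrivial) UID is finitely implied by the constraints: it holds in every finite
instance satisfying them. -/
def finImpUID (Su : Set (UID σ)) (Sf : Set (FD σ)) (τ : UID σ) : Prop :=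
  ∀ I : Inst σ ℕ, I.Finite → satAllC I Su Sf → satUID I τ

/-- A (nontrivial) FD is finitely implied by the constraints: it holds in every finite
instance satisfying them. -/
def finImpFD (Su : Set (UID σ)) (Sf : Set (FD σ)) (φ : FD σ) : Prop :=
  ∀ I : Inst σ ℕ, I.Finite → satAllC I Su Sf → satFD I φ

/-!
Given a superinstance `I` of `I₀` satisfying the UIDs, unravel `I` into a tree hanging off `I₀`:
whenever an element `x` of the unravelling lies over an element of `I` that occurs at a position
`p`, and `x` was not created at `p`, add one fact with `x` at `p` and fresh elements everywhere
else, copied from a fact of `I`. An element then occurs at exactly the positions where its image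
in `I` does, so UIDs are inherited from `I`. A new fact never shares an element with another fact
at the same position, so FDs, whose left-hand sides are nonempty, are inherited from `I₀`.
Finally the unravelling maps homomorphically to `I`, so every query true in it is true in `I`.
It remains to rename the countably many terms to natural numbers while fixing `I₀` pointwise.
-/

/-! ### Homomorphisms -/

/-- The image of a fact under a map of elements. A homomorphism from `I` to `J` is a map `f` with
`Set.MapsTo (Fact.map f) I J`. -/
def Fact.map (f : α → β) (F : Fact σ α) : Fact σ β := ⟨F.1, f ∘ F.2⟩

theorem mk_mem_image_map {f : α → β} {I : Inst σ α} {R : σ.Rel} {t : Fin (σ.ar R) → β} :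
    (⟨R, t⟩ : Fact σ β) ∈ Fact.map f '' I ↔ ∃ u, (⟨R, u⟩ : Fact σ α) ∈ I ∧ f ∘ u = t := by
  constructor
  · rintro ⟨⟨_, u⟩, hu, heq⟩
    cases heq
    exact ⟨u, hu, rfl⟩
  · rintro ⟨u, hu, rfl⟩
    exact ⟨_, hu, rfl⟩

theorem occursAt.map {f : α → β} {I : Inst σ α} {J : Inst σ β} {p : σ.Pos} {a : α}
    (ha : occursAt I p a) (hf : Set.MapsTo (Fact.map f) I J) : occursAt J p (f a) := by
  obtain ⟨t, ht, rfl⟩ := ha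
  exact ⟨f ∘ t, hf ht, rfl⟩

theorem satCQ.map {f : α → β} {I : Inst σ α} {J : Inst σ β} {q : CQ σ}
    (hq : satCQ I q) (hf : Set.MapsTo (Fact.map f) I J) : satCQ J q := by
  obtain ⟨h, hh⟩ := hq
  exact ⟨f ∘ h, fun A hA => hf (hh A hA)⟩

theorem satUID.image_map {I : Inst σ α} {τ : UID σ} (hτ : satUID I τ) (f : α → β) :
    satUID (Fact.map f '' I) τ := by
  rintro _ ⟨t, ht, rfl⟩
  obtain ⟨u, hu, rfl⟩ := mk_mem_image_map.1 ht
  exact (hτ _ ⟨u, hu, rfl⟩).map (Set.mapsTo_image _ _)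

theorem satFD.image_map {I : Inst σ α} {φ : FD σ} (hφ : satFD I φ) {f : α → β}
    (hf : f.Injective) : satFD (Fact.map f '' I) φ := by
  intro t u ht hu htu
  obtain ⟨t', ht', rfl⟩ := mk_mem_image_map.1 ht
  obtain ⟨u', hu', rfl⟩ := mk_mem_image_map.1 hu
  exact congrArg f (hφ t' u' ht' hu' fun i hi => hf (htu i hi))

theorem mapsTo_map_invFun [Nonempty α] {f : α → β} (hf : f.Injective) (I : Inst σ α) :
    Set.MapsTo (Fact.map f.invFun) (Fact.map f '' I) I := by
  rintro _ ⟨⟨R, t⟩, ht, rfl⟩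
  simpa only [Fact.map, ← Function.comp_assoc, Function.invFun_comp hf, Function.id_comp] using ht

/-! ### Terms -/

/-- The elements of the unravelling: those of the original instance, and the fresh element
`null x p i` placed at index `i` of the fact created in order to put `x` at position `p`. At index
`p.2` that fact has `x` itself, so `null x p p.2` is a junk term. -/
inductive Term (σ : Sig) (α : Type) : Type
  | base : α → Term σ α
  | null (x : Term σ α) (p : σ.Pos) (i : Fin (σ.ar p.1)) : Term σ α

namespace Term

/-- The element of the original instance from which a term is built. -/
def root : Term σ α → α
  | base a => a
  | null x _ _ => x.root

/-- The creation steps of a term, latest first. -/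
def steps : Term σ α → List (Σ p : σ.Pos, Fin (σ.ar p.1))
  | base _ => []
  | null x p i => ⟨p, i⟩ :: x.steps

theorem eq_of_root_eq_of_steps_eq {x y : Term σ α} (hroot : x.root = y.root)
    (hsteps : x.steps = y.steps) : x = y := by
  induction x generalizing y with
  | base a =>
    cases y with
    | base b => exact congrArg base hroot
    | null y q j => cases hsteps
  | null x p i ih =>
    cases y with
    | base b => cases hsteps
    | null y q j =>
      obtain ⟨hlast, hinit⟩ := List.cons.inj hsteps
      cases hlast
      rw [ih (y := y) hroot hinit]

instance [Countable α] : Countable (Term σ α) :=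
  have := σ.rel_fin
  Function.Injective.countable (f := fun x : Term σ α => (x.root, x.steps)) fun _ _ h =>
    eq_of_root_eq_of_steps_eq (congrArg Prod.fst h) (congrArg Prod.snd h)

end Term

theorem exists_injective_eqOn [Countable α] {s : Set α} {g : α → β} (hg : s.InjOn g)
    (hs : (g '' s)ᶜ.Infinite) : ∃ f : α → β, f.Injective ∧ s.EqOn f g := by
  classical
  have := hs.to_subtype
  obtain ⟨code, hcode⟩ := Countable.exists_injective_nat α
  let fresh : α → ↥(g '' s)ᶜ := Infinite.natEmbedding _ ∘ code
  have hfresh : fresh.Injective := (Infinite.natEmbedding _).injective.comp hcode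
  refine ⟨s.piecewise g (Subtype.val ∘ fresh), (Set.injective_piecewise_iff _).2
    ⟨hg, (Subtype.val_injective.comp hfresh).injOn, fun x hx y _ hxy => ?_⟩,
    s.piecewise_eqOn g _⟩
  exact (fresh y).2 ⟨x, hx, hxy⟩

theorem exists_injective_base_eq [Countable α] {s : Set α} (hs : sᶜ.Infinite) :
    ∃ f : Term σ α → α, f.Injective ∧ ∀ a ∈ s, f (.base a) = a := by
  have himage : Term.root '' (Term.base '' s : Set (Term σ α)) = s :=
    Set.image_image _ _ _ |>.trans (Set.image_id s)
  have hroot : (Term.base '' s : Set (Term σ α)).InjOn Term.root := by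
    rintro _ ⟨a, -, rfl⟩ _ ⟨b, -, rfl⟩ hab
    exact congrArg Term.base hab
  obtain ⟨f, hf, hfroot⟩ := exists_injective_eqOn hroot (himage.symm ▸ hs)
  exact ⟨f, hf, fun a ha => hfroot ⟨a, ha, rfl⟩⟩

/-! ### The unravelling -/

open Classical in
/-- The tuple of a chosen fact of `I` with `a` at position `p`; a constant tuple if there is no such
fact. -/
noncomputable def witness (I : Inst σ α) (p : σ.Pos) (a : α) : Fin (σ.ar p.1) → α :=
  if h : occursAt I p a then h.choose else fun _ => a

theorem witness_mem {I : Inst σ α} {p : σ.Pos} {a : α} (h : occursAt I p a) :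
    (⟨p.1, witness I p a⟩ : Fact σ α) ∈ I := by
  rw [witness, dif_pos h]
  exact h.choose_spec.1

theorem witness_apply {I : Inst σ α} {p : σ.Pos} {a : α} (h : occursAt I p a) :
    witness I p a p.2 = a := by
  rw [witness, dif_pos h]
  exact h.choose_spec.2

namespace Term

/-- The projection of the unravelling to `I`. -/
noncomputable def proj (I : Inst σ α) : Term σ α → α
  | base a => a
  | null x p i => witness I p (x.proj I) i

/-- The position `s` is one at which the term is created: an occurrence in `I₀` for an original
element, and the position of the null in the fact that introduces it otherwise. The last two
conjuncts say that this fact is really added (see `IsTrigger`, which cannot be named within the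
recursion); other nulls are native nowhere. -/
def NativeAt (I₀ I : Inst σ α) : Term σ α → σ.Pos → Prop
  | base a, s => occursAt I₀ s a
  | null x p i, s => s = ⟨p.1, i⟩ ∧ i ≠ p.2 ∧ occursAt I p (x.proj I) ∧ ¬ x.NativeAt I₀ I p

/-- A fact with `x` at position `p` must be added to the unravelling. -/
def IsTrigger (I₀ I : Inst σ α) (x : Term σ α) (p : σ.Pos) : Prop :=
  occursAt I p (x.proj I) ∧ ¬ x.NativeAt I₀ I p

/-- The tuple of the fact added to the unravelling in order to put `x` at position `p`. -/
def extend (x : Term σ α) (p : σ.Pos) : Fin (σ.ar p.1) → Term σ α :=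
  Function.update (null x p) p.2 x

theorem extend_self (x : Term σ α) (p : σ.Pos) : x.extend p p.2 = x :=
  Function.update_self ..

theorem extend_of_ne (x : Term σ α) {p : σ.Pos} {i : Fin (σ.ar p.1)} (hi : i ≠ p.2) :
    x.extend p i = null x p i :=
  Function.update_of_ne hi ..

theorem proj_comp_extend {I : Inst σ α} {x : Term σ α} {p : σ.Pos}
    (h : occursAt I p (x.proj I)) : proj I ∘ x.extend p = witness I p (x.proj I) := by
  funext i
  by_cases hi : i = p.2
  · rw [hi, Function.comp_apply, extend_self, witness_apply h]
  · rw [Function.comp_apply, extend_of_ne x hi, proj]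

end Term

/-- The unravelling of `I` around `I₀`: the facts of `I₀` together with one fact for every
trigger. -/
def unravel (I₀ I : Inst σ α) : Inst σ (Term σ α) :=
  {F | (∃ t, (⟨F.1, t⟩ : Fact σ α) ∈ I₀ ∧ F.2 = Term.base ∘ t) ∨
    ∃ (x : Term σ α) (j : Fin (σ.ar F.1)),
      x.IsTrigger I₀ I ⟨F.1, j⟩ ∧ F.2 = x.extend ⟨F.1, j⟩}

section Unravel

open Term

variable {I₀ I : Inst σ α} {x y : Term σ α}

theorem mk_mem_unravel {R : σ.Rel} {t : Fin (σ.ar R) → Term σ α} :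
    (⟨R, t⟩ : Fact σ (Term σ α)) ∈ unravel I₀ I ↔
      (∃ u, (⟨R, u⟩ : Fact σ α) ∈ I₀ ∧ t = base ∘ u) ∨
        ∃ (x : Term σ α) (j : Fin (σ.ar R)), x.IsTrigger I₀ I ⟨R, j⟩ ∧ t = x.extend ⟨R, j⟩ :=
  Iff.rfl

theorem map_base_mem_unravel {F : Fact σ α} (hF : F ∈ I₀) : F.map base ∈ unravel I₀ I :=
  .inl ⟨F.2, hF, rfl⟩

theorem mapsTo_proj_unravel (hI : I₀ ⊆ I) :
    Set.MapsTo (Fact.map (proj I)) (unravel I₀ I) I := by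
  rintro ⟨R, _⟩ hF
  rcases mk_mem_unravel.1 hF with ⟨t, ht, rfl⟩ | ⟨x, j, hx, rfl⟩
  · exact hI ht
  · rw [Fact.map, proj_comp_extend hx.1]
    exact witness_mem hx.1

theorem Term.IsTrigger.occursAt_unravel {p : σ.Pos} (hx : x.IsTrigger I₀ I p) :
    occursAt (unravel I₀ I) p x :=
  ⟨x.extend p, .inr ⟨x, p.2, hx, rfl⟩, x.extend_self p⟩

theorem Term.NativeAt.occursAt_unravel {p : σ.Pos} (hx : x.NativeAt I₀ I p) :
    occursAt (unravel I₀ I) p x := by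
  cases x with
  | base a =>
    obtain ⟨t, ht, rfl⟩ := hx
    exact ⟨base ∘ t, map_base_mem_unravel ht, rfl⟩
  | null x q i =>
    obtain ⟨rfl, hi, htrigger⟩ := hx
    exact ⟨x.extend q, .inr ⟨x, q.2, htrigger, rfl⟩, x.extend_of_ne hi⟩

theorem occursAt_unravel_iff (hI : I₀ ⊆ I) {p : σ.Pos} :
    occursAt (unravel I₀ I) p x ↔ occursAt I p (x.proj I) := by
  refine ⟨fun hx => hx.map (mapsTo_proj_unravel hI), fun hx => ?_⟩
  by_cases hnative : x.NativeAt I₀ I p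
  · exact hnative.occursAt_unravel
  · exact IsTrigger.occursAt_unravel ⟨hx, hnative⟩

theorem satUID.unravel {τ : UID σ} (hτ : satUID I τ) (hI : I₀ ⊆ I) :
    satUID (unravel I₀ I) τ := by
  intro x hx
  rw [occursAt_unravel_iff hI] at hx ⊢
  exact hτ _ hx

theorem Term.IsTrigger.nativeAt_extend_iff {p : σ.Pos} (hx : x.IsTrigger I₀ I p)
    (i : Fin (σ.ar p.1)) : (x.extend p i).NativeAt I₀ I ⟨p.1, i⟩ ↔ i ≠ p.2 := by
  by_cases hi : i = p.2
  · subst hi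
    rw [extend_self]
    exact iff_of_false hx.2 (fun h => h rfl)
  · rw [extend_of_ne x hi]
    exact iff_of_true ⟨rfl, hi, hx⟩ hi

theorem Term.IsTrigger.base_ne_extend {p : σ.Pos} (hx : x.IsTrigger I₀ I p)
    {t : Fin (σ.ar p.1) → α} (ht : (⟨p.1, t⟩ : Fact σ α) ∈ I₀) (i : Fin (σ.ar p.1)) :
    base (t i) ≠ x.extend p i := by
  intro heq
  have hnative : (base (t i)).NativeAt I₀ I ⟨p.1, i⟩ := ⟨t, ht, rfl⟩
  have hi : i ≠ p.2 := (hx.nativeAt_extend_iff i).1 (heq ▸ hnative)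
  rw [extend_of_ne x hi] at heq
  cases heq

theorem Term.IsTrigger.extend_eq_extend {R : σ.Rel} {i j k : Fin (σ.ar R)}
    (hx : x.IsTrigger I₀ I ⟨R, j⟩) (hy : y.IsTrigger I₀ I ⟨R, k⟩)
    (h : x.extend ⟨R, j⟩ i = y.extend ⟨R, k⟩ i) : x.extend ⟨R, j⟩ = y.extend ⟨R, k⟩ := by
  have hiff : i ≠ j ↔ i ≠ k := by
    rw [← hx.nativeAt_extend_iff i, h, hy.nativeAt_extend_iff i]
  by_cases hi : i = j
  · obtain rfl : i = k := not_ne_iff.1 fun hne => hiff.2 hne hi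
    subst hi
    rw [show x = y from (x.extend_self ⟨R, i⟩).symm.trans (h.trans (y.extend_self ⟨R, i⟩))]
  · rw [extend_of_ne x hi, extend_of_ne y (hiff.1 hi)] at h
    cases h
    rfl

theorem satFD.unravel {φ : FD σ} (hφ : satFD I₀ φ) (I : Inst σ α) :
    satFD (unravel I₀ I) φ := by
  intro t u ht hu htu
  obtain ⟨i, hi⟩ := φ.lhs_nonempty
  have hshared : t i = u i := htu i hi
  rcases mk_mem_unravel.1 ht with ⟨t', ht', rfl⟩ | ⟨x, j, hx, rfl⟩ <;>
    rcases mk_mem_unravel.1 hu with ⟨u', hu', rfl⟩ | ⟨y, k, hy, rfl⟩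
  · exact congrArg base (hφ t' u' ht' hu' fun l hl => base.inj (htu l hl))
  · exact (hy.base_ne_extend ht' i hshared).elim
  · exact (hx.base_ne_extend hu' i hshared.symm).elim
  · have heq : x.extend ⟨φ.rel, j⟩ = y.extend ⟨φ.rel, k⟩ := hx.extend_eq_extend hy hshared
    exact congrFun heq φ.rhs

end Unravel

theorem subset_image_map_unravel {I₀ : Inst σ α} {f : Term σ α → α}
    (hf : ∀ a ∈ activeDom I₀, f (.base a) = a) (I : Inst σ α) :
    I₀ ⊆ Fact.map f '' unravel I₀ I := by
  rintro ⟨R, t⟩ ht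
  refine mk_mem_image_map.2 ⟨Term.base ∘ t, map_base_mem_unravel ht, funext fun i => ?_⟩
  exact hf (t i) ⟨_, ht, i, rfl⟩

theorem finite_activeDom {I : Inst σ α} (hI : I.Finite) : (activeDom I).Finite := by
  have heq : activeDom I = ⋃ F ∈ I, Set.range F.2 := by
    ext
    simp only [activeDom, Set.mem_ofPred_eq, Set.mem_iUnion, Set.mem_range, exists_prop]
  rw [heq]
  exact hI.biUnion fun F _ => Set.finite_range F.2

theorem separability_general
    {σ : Sig} (Sf : Set (FD σ)) (Su : Set (UID σ))
    (I₀ : Inst σ ℕ) (hI₀ : (activeDom I₀)ᶜ.Infinite)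
    (hI₀fd : ∀ φ ∈ Sf, satFD I₀ φ)
    (q : CQ σ) :
    unrEntails I₀ Su Sf q ↔ unrEntails I₀ Su (∅ : Set (FD σ)) q := by
  refine ⟨fun hq I hI hS => ?_, fun hq I hI hS => hq I hI ⟨hS.1, fun _ hφ => hφ.elim⟩⟩
  obtain ⟨f, hf, hfbase⟩ := exists_injective_base_eq (σ := σ) hI₀
  have : Nonempty (Term σ ℕ) := ⟨.base 0⟩
  have hunravel : satCQ (Fact.map f '' unravel I₀ I) q :=
    hq _ (subset_image_map_unravel hfbase I)
      ⟨fun τ hτ => ((hS.1 τ hτ).unravel hI).image_map f,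
        fun φ hφ => ((hI₀fd φ hφ).unravel I).image_map hf⟩
  exact (hunravel.map (mapsTo_map_invFun hf _)).map (mapsTo_proj_unravel hI)

/-- **Separability of UIDs and FDs.** If the finite instance `I₀` satisfies the FDs
`Sf`, then for every Boolean CQ `q`, unrestricted open-world entailment under
`Sf ∪ Su` coincides with unrestricted open-world entailment under the UIDs `Su`
alone. -/
theorem separability
    {σ : Sig} (Sf : Set (FD σ)) (Su : Set (UID σ))
    (I₀ : Inst σ ℕ) (hI₀fin : I₀.Finite)
    (hI₀fd : ∀ φ ∈ Sf, satFD I₀ φ)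
    (q : CQ σ) :
    unrEntails I₀ Su Sf q ↔ unrEntails I₀ Su (∅ : Set (FD σ)) q :=
  separability_general Sf Su I₀ (finite_activeDom hI₀fin).infinite_compl hI₀fd q

end FQA
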